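/- Assume the abc-conjecture. Let F(U,V) ∈ ℤ[U,V] be a nonzero homogeneous polynomial of degree r without repeated irreducible factors (i.e., squarefree), and let q ≥ 2 be an integer. Then for every ε > 0 there exists a constant c > 0, depending only on F, q and ε, such that for all coprime integers u, v with F(u,v) ≠ 0, the product of the distinct primes p whose exact multiplicity m = v_p(F(u,v)) in F(u,v) satisfies 1 ≤ m ≤ q−1 is at least c · max(|u|,|v|)^{r − 2 − 2/(q−1) − ε}. -/

import Mathlib

/-!
Write `H = max |u| |v|`. The core is the estimate `rad F(u,v) ≫ H ^ (r - 2 - δ)`, which follows from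
the abc-conjecture by way of a Belyi polynomial: a nonconstant `f ∈ ℚ[X]` taking only the values `0`
and `1` at the roots of `F(X, 1)` and at its own critical points. To find `f`, one first makes these
values rational, by induction on the degree: a polynomial sends its roots to `0`, and its critical
values are roots of a polynomial of smaller degree. Finitely many rational points are then reduced
to two by the maps `const · (X - a) ^ m * (X - c) ^ n`.

Let `D = deg f`. Since every root of `f'` is a root of `f (f - 1)`, counting multiplicities shows
that the radical of `f (f - 1)` has degree `2 D - (D - 1) = D + 1`; it is divisible by `F(X, 1)`.
After homogenization, the form of degree `3 D` attached to `f (f - 1)` divides a power of `F G`, for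
a form `G` of degree `s = D + 2 - r`.

Put `y = f(u / v)`. The height of `y` is `≫ H ^ D`. Applying abc to the relation between `y.num`,
`y.num - y.den` and `y.den` bounds this height by the radical of their product, up to the exponent
`1 + η`. That product divides a constant times a power of `F(u,v) G(u,v)`, and `G(u,v) ≪ H ^ s`, so
`H ^ D ≪ (H ^ s * rad F(u,v)) ^ (1 + η)`, which is the core estimate.

Finally let `A` be the product of the primes dividing `n = F(u,v)` with multiplicity below `q`.
Comparing the powers of each prime gives `(rad n) ^ q ≤ A ^ (q - 1) * |n|`. As `|n| ≪ H ^ r`, the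
core estimate yields `A ^ (q - 1) ≫ H ^ (q (r - 2 - δ) - r)`.
-/

/-- The radical of a natural number: the product of its distinct prime factors. -/
def radNat (m : ℕ) : ℕ := ∏ p ∈ m.primeFactors, p

/-- The abc-conjecture. -/
def ABCConjecture : Prop :=
  ∀ ε : ℝ, 0 < ε → ∃ K : ℝ, 0 < K ∧
    ∀ a b c : ℕ, 0 < a → 0 < b → 0 < c → Nat.Coprime a b → a + b = c →
      (c : ℝ) ≤ K * (radNat (a * b * c) : ℝ) ^ ((1 : ℝ) + ε)

open Polynomial UniqueFactorizationMonoid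

section Belyi

lemma exists_lt_forall_eq_or_eq {α : Type*} [LinearOrder α] [NoMaxOrder α] [Nonempty α]
    {T : Finset α} (hT : ¬∃ a ∈ T, ∃ b ∈ T, ∃ c ∈ T, a < b ∧ b < c) :
    ∃ a c, a < c ∧ ∀ t ∈ T, t = a ∨ t = c := by
  suffices h : ∃ a c, a ≤ c ∧ ∀ t ∈ T, t = a ∨ t = c by
    obtain ⟨a, c, hac, hTac⟩ := h
    rcases hac.lt_or_eq with hlt | rfl
    · exact ⟨a, c, hlt, hTac⟩
    · obtain ⟨b, hb⟩ := exists_gt a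
      exact ⟨a, b, hb, fun t ht => .inl (or_self_iff.mp (hTac t ht))⟩
  rcases T.eq_empty_or_nonempty with rfl | hne
  · exact ⟨Classical.arbitrary α, _, le_rfl, by simp⟩
  refine ⟨_, _, T.min'_le_max' hne, fun t ht => ?_⟩
  by_contra! h
  exact hT ⟨_, T.min'_mem hne, t, ht, _, T.max'_mem hne,
    (T.min'_le t ht).lt_of_ne' h.1, (T.le_max' t ht).lt_of_ne h.2⟩

section Field

variable {K : Type*} (L : Type*) [Field K] [Field L] [Algebra K L]

/-- The critical values of `f` in an extension `L` of the coefficient field: its values at the roots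
in `L` of its derivative. -/
def criticalValues (f : K[X]) : Set L :=
  (fun α => aeval α f) '' {α | aeval α (derivative f) = 0}

lemma criticalValues_comp_subset (f g : K[X]) :
    criticalValues L (f.comp g) ⊆
      criticalValues L f ∪ (fun β => aeval β f) '' criticalValues L g := by
  rintro _ ⟨α, hα, rfl⟩
  rw [Set.mem_ofPred_eq, derivative_comp, map_mul, mul_eq_zero, aeval_comp] at hα
  simp only [aeval_comp]
  exact hα.symm.imp (fun h => ⟨_, h, rfl⟩) fun h => ⟨_, ⟨α, h, rfl⟩, rfl⟩

variable {L} in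
lemma aeval_mem_pair_of_eval_mem_pair {f : K[X]} {t : K} {β : L} (hβ : algebraMap K L t = β)
    (ht : f.eval t ∈ ({0, 1} : Set K)) : aeval β f ∈ ({0, 1} : Set L) := by
  rw [← hβ, aeval_algebraMap_apply_eq_algebraMap_eval]
  rcases ht with ht | ht <;> rw [ht] <;> simp

variable [CharZero K]

/-- The polynomial is the minimal polynomial of the class of `f` in `K[X] / (f')`. -/
lemma exists_natDegree_lt_aeval_criticalValues_eq_zero {f : K[X]} (hf : 0 < f.natDegree) :
    ∃ q : K[X], q ≠ 0 ∧ q.natDegree < f.natDegree ∧ ∀ β ∈ criticalValues L f, aeval β q = 0 := by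
  have hf' : derivative f ≠ 0 := fun h => hf.ne' (derivative_eq_zero.mp h)
  let pb := AdjoinRoot.powerBasis hf'
  have : Module.Finite K (AdjoinRoot (derivative f)) := pb.finite
  let x := AdjoinRoot.mk (derivative f) f
  have hdvd : derivative f ∣ (minpoly K x).comp f := by
    have hx : aeval x (minpoly K x) = 0 := minpoly.aeval K x
    rwa [← AdjoinRoot.mk_eq_zero, comp, hom_eval₂]
  refine ⟨minpoly K x, minpoly.ne_zero (.of_finite K x), ?_, ?_⟩
  · calc (minpoly K x).natDegree ≤ Module.finrank K (AdjoinRoot (derivative f)) :=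
        minpoly.natDegree_le x
      _ = (derivative f).natDegree := by rw [pb.finrank, AdjoinRoot.powerBasis_dim]
      _ < f.natDegree := natDegree_derivative_lt hf.ne'
  · rintro _ ⟨α, hα, rfl⟩
    rw [← aeval_comp]
    exact aeval_eq_zero_of_dvd_aeval_eq_zero hdvd hα

lemma exists_aeval_mem_range_algebraMap {p : K[X]} (hp : p ≠ 0) :
    ∃ g : K[X], 0 < g.natDegree ∧ criticalValues L g ⊆ Set.range (algebraMap K L) ∧
      ∀ α : L, aeval α p = 0 → aeval α g ∈ Set.range (algebraMap K L) := by
  induction hn : p.natDegree using Nat.strong_induction_on generalizing p with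
  | _ n ih =>
    subst hn
    rcases Nat.eq_zero_or_pos p.natDegree with hdeg | hdeg
    · obtain ⟨c, rfl⟩ := natDegree_eq_zero.mp hdeg
      have hc : c ≠ 0 := by rintro rfl; exact hp C_0
      exact ⟨X, by simp, by simp [criticalValues], by simp [hc]⟩
    · obtain ⟨q, hq, hqp, hqv⟩ := exists_natDegree_lt_aeval_criticalValues_eq_zero L hdeg
      obtain ⟨g, hg, hgc, hgq⟩ := ih _ hqp hq rfl
      refine ⟨g.comp p, by rw [natDegree_comp]; positivity, ?_, fun α hα => ⟨g.eval 0, ?_⟩⟩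
      · refine (criticalValues_comp_subset L g p).trans (Set.union_subset hgc ?_)
        rintro _ ⟨β, hβ, rfl⟩
        exact hgq β (hqv β hβ)
      · rw [aeval_comp, hα, ← aeval_algebraMap_apply_eq_algebraMap_eval, map_zero]

end Field

section Rational

variable (L : Type*) [Field L] [Algebra ℚ L]

lemma exists_nat_mul_eq_nat_mul {x y : ℚ} (hx : 0 < x) (hy : 0 < y) :
    ∃ m n : ℕ, m * x = n * y ∧ 0 < m ∧ 0 < n := by
  have hyx : 0 < (y / x).num := Rat.num_pos.mpr (div_pos hy hx)
  refine ⟨(y / x).num.toNat, (y / x).den, ?_, by omega, Rat.den_pos _⟩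
  have hcast : ((y / x).num.toNat : ℚ) = (y / x).num := by
    exact_mod_cast Int.toNat_of_nonneg hyx.le
  rw [hcast, ← Rat.mul_den_eq_num]
  field_simp

/-- The map is `const · (X - a) ^ m * (X - c) ^ n` with `m * (c - b) = n * (b - a)`, so that `b` is
its only critical point besides `a` and `c`. -/
lemma exists_belyi_map {a b c : ℚ} (hab : a < b) (hbc : b < c) :
    ∃ h : ℚ[X], 0 < h.natDegree ∧ h.eval a = 0 ∧ h.eval b = 1 ∧ h.eval c = 0 ∧
      criticalValues L h ⊆ {0, 1} := by
  obtain ⟨_ | m, _ | n, hmn, hm, hn⟩ :=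
    exists_nat_mul_eq_nat_mul (sub_pos.mpr hbc) (sub_pos.mpr hab)
  iterate 3 omega
  set g : ℚ[X] := (X - C a) ^ (m + 1) * (X - C c) ^ (n + 1) with hg
  have hgb : g.eval b ≠ 0 := by
    simp [hg, sub_ne_zero, hab.ne', hbc.ne]
  have hg' : derivative g =
      (X - C a) ^ m * (X - C c) ^ n * (C ((m + n + 2 : ℕ) : ℚ) * (X - C b)) := by
    have hC := congrArg C hmn
    simp only [hg, derivative_mul, derivative_X_sub_C_pow, map_mul, map_sub, map_natCast] at hC ⊢
    push_cast at hC ⊢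
    linear_combination -((X - C a) ^ m * (X - C c) ^ n * hC)
  set h : ℚ[X] := C (g.eval b)⁻¹ * g with hh
  have ha : h.eval a = 0 := by simp [hh, hg]
  have hb : h.eval b = 1 := by rw [hh, eval_mul, eval_C, inv_mul_cancel₀ hgb]
  have hc : h.eval c = 0 := by simp [hh, hg]
  refine ⟨h, ?_, ha, hb, hc, ?_⟩
  · rw [natDegree_C_mul (inv_ne_zero hgb), hg, natDegree_mul (pow_ne_zero _ (X_sub_C_ne_zero _))
      (pow_ne_zero _ (X_sub_C_ne_zero _)), natDegree_pow, natDegree_X_sub_C]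
    omega
  · rintro _ ⟨α, hα, rfl⟩
    obtain ⟨t, ht, rfl⟩ : ∃ t ∈ ({a, b, c} : Set ℚ), algebraMap ℚ L t = α := by
      have := algebraRat.charZero L
      have hmn0 : ((m + n + 2 : ℕ) : L) ≠ 0 := Nat.cast_ne_zero.mpr (m + n + 1).succ_ne_zero
      simp only [hh, derivative_C_mul, hg', Set.mem_ofPred_eq, map_mul, map_pow, map_sub, aeval_X,
        aeval_C, map_natCast, mul_eq_zero, pow_eq_zero_iff', map_eq_zero, inv_eq_zero, hgb, hmn0,
        sub_eq_zero, false_or] at hα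
      rcases hα with (⟨h, -⟩ | ⟨h, -⟩) | h <;> exact ⟨_, by simp, h.symm⟩
    apply aeval_mem_pair_of_eval_mem_pair rfl
    rcases ht with rfl | rfl | rfl
    exacts [.inl ha, .inr hb, .inl hc]

lemma exists_belyi_of_forall_eq_or_eq {T : Set ℚ} {a c : ℚ} (hac : a < c)
    (hT : ∀ t ∈ T, t = a ∨ t = c) :
    ∃ f : ℚ[X], 0 < f.natDegree ∧ criticalValues L f ⊆ {0, 1} ∧
      ∀ t ∈ T, f.eval t ∈ ({0, 1} : Set ℚ) := by
  have hca : c - a ≠ 0 := sub_ne_zero.mpr hac.ne'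
  have hdeg : (C (c - a)⁻¹ * (X - C a)).natDegree = 1 := by
    rw [natDegree_C_mul (inv_ne_zero hca), natDegree_X_sub_C]
  refine ⟨C (c - a)⁻¹ * (X - C a), by simp [hdeg], ?_, fun t ht => ?_⟩
  · rintro _ ⟨α, hα, -⟩
    have hα' : algebraMap ℚ L (c - a) = 0 := by simpa using hα
    exact absurd ((map_eq_zero _).mp hα') hca
  · rcases hT t ht with rfl | rfl <;> simp [hca]

lemma exists_belyi_of_finset (T : Finset ℚ) :
    ∃ f : ℚ[X], 0 < f.natDegree ∧ criticalValues L f ⊆ {0, 1} ∧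
      ∀ t ∈ T, f.eval t ∈ ({0, 1} : Set ℚ) := by
  induction hn : T.card using Nat.strong_induction_on generalizing T with
  | _ n ih =>
    subst hn
    by_cases h3 : ∃ a ∈ T, ∃ b ∈ T, ∃ c ∈ T, a < b ∧ b < c
    · obtain ⟨a, ha, b, hb, c, hc, hab, hbc⟩ := h3
      obtain ⟨h, hdeg, h_a, h_b, h_c, hcrit⟩ := exists_belyi_map L hab hbc
      have hcard : (T.image h.eval).card < T.card := by
        refine Finset.card_image_le.lt_of_ne fun heq => (hab.trans hbc).ne ?_
        exact Finset.card_image_iff.mp heq ha hc (h_a.trans h_c.symm)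
      obtain ⟨f, hf, hfc, hfT⟩ := ih _ hcard _ rfl
      have hfT' : ∀ t ∈ T, f.eval (h.eval t) ∈ ({0, 1} : Set ℚ) := fun t ht =>
        hfT _ (Finset.mem_image_of_mem _ ht)
      refine ⟨f.comp h, by rw [natDegree_comp]; positivity, ?_, by simpa only [eval_comp]⟩
      refine (criticalValues_comp_subset L f h).trans (Set.union_subset hfc ?_)
      rintro _ ⟨β, hβ, rfl⟩
      rcases hcrit hβ with rfl | rfl
      · exact aeval_mem_pair_of_eval_mem_pair (map_zero _) (h_a ▸ hfT' a ha)
      · exact aeval_mem_pair_of_eval_mem_pair (map_one _) (h_b ▸ hfT' b hb)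
    · obtain ⟨a, c, hac, hTac⟩ := exists_lt_forall_eq_or_eq h3
      exact exists_belyi_of_forall_eq_or_eq L hac hTac

theorem exists_belyi_polynomial {p : ℚ[X]} (hp : p ≠ 0) :
    ∃ f : ℚ[X], 0 < f.natDegree ∧ criticalValues L f ⊆ {0, 1} ∧
      ∀ α : L, aeval α p = 0 → aeval α f ∈ ({0, 1} : Set L) := by
  obtain ⟨g, hg, hgc, hgp⟩ := exists_aeval_mem_range_algebraMap L hp
  have hg' : derivative g ≠ 0 := fun h => hg.ne' (derivative_eq_zero.mp h)
  have hfin : (criticalValues L g ∪ (fun α => aeval α g) '' p.rootSet L).Finite := by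
    refine .union (.image _ (((derivative g).rootSet_finite L).subset fun α hα => ?_))
      ((p.rootSet_finite L).image _)
    exact mem_rootSet.mpr ⟨hg', hα⟩
  obtain ⟨f, hf, hfc, hfT⟩ := exists_belyi_of_finset L
    (hfin.preimage (algebraMap ℚ L).injective.injOn).toFinset
  have hfβ : ∀ β ∈ criticalValues L g ∪ (fun α => aeval α g) '' p.rootSet L,
      aeval β f ∈ ({0, 1} : Set L) := by
    intro β hβ
    obtain ⟨t, rfl⟩ : β ∈ Set.range (algebraMap ℚ L) := by
      rcases hβ with hβ | ⟨α, hα, rfl⟩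
      · exact hgc hβ
      · exact hgp α (mem_rootSet.mp hα).2
    exact aeval_mem_pair_of_eval_mem_pair rfl (hfT t (by simpa using hβ))
  refine ⟨f.comp g, by rw [natDegree_comp]; positivity, ?_, fun α hα => ?_⟩
  · refine (criticalValues_comp_subset L f g).trans (Set.union_subset hfc ?_)
    rintro _ ⟨β, hβ, rfl⟩
    exact hfβ β (.inl hβ)
  · rw [aeval_comp]
    exact hfβ _ (.inr ⟨α, mem_rootSet.mpr ⟨hp, hα⟩, rfl⟩)

end Rational

end Belyi

section Radical

variable {K : Type*} [Field K]

lemma rootMultiplicity_mul_sub_one [CharZero K] {f : K[X]} {α : K}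
    (hf : f * (f - 1) ≠ 0) (hα : f.eval α ∈ ({0, 1} : Set K)) :
    (f * (f - 1)).rootMultiplicity α = (derivative f).rootMultiplicity α + 1 := by
  have key {g h : K[X]} (hgh : g * h ≠ 0) (hg : g.eval α = 0) (hh : h.eval α ≠ 0) :
      (g * h).rootMultiplicity α = (derivative g).rootMultiplicity α + 1 := by
    have hpos : 0 < g.rootMultiplicity α := (rootMultiplicity_pos (left_ne_zero_of_mul hgh)).mpr hg
    rw [rootMultiplicity_mul hgh, rootMultiplicity_eq_zero hh,
      derivative_rootMultiplicity_of_root hg]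
    omega
  rcases hα with hα | hα
  · exact key hf hα (by simp [hα])
  · have hα' : f.eval α = 1 := hα
    rw [mul_comm] at hf ⊢
    simpa using key hf (by simp [hα']) (by simp [hα'])

variable (L : Type*) [Field L] [Algebra K L]

lemma aroots_radical [PerfectField K] [DecidableEq K] [DecidableEq L] {p : K[X]} (hp : p ≠ 0) :
    (radical p).aroots L = (p.aroots L).dedup := by
  have hnodup : ((radical p).aroots L).Nodup :=
    nodup_roots (PerfectField.separable_iff_squarefree.mpr squarefree_radical).map
  refine (Multiset.Nodup.ext hnodup (Multiset.nodup_dedup _)).mpr fun α => ?_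
  obtain ⟨n, hn⟩ := exists_dvd_radical_self_pow hp
  rw [Multiset.mem_dedup, mem_aroots, mem_aroots]
  refine ⟨fun h => ⟨hp, ?_⟩, fun h => ⟨radical_ne_zero, ?_⟩⟩
  · exact aeval_eq_zero_of_dvd_aeval_eq_zero radical_dvd_self h.2
  · have := aeval_eq_zero_of_dvd_aeval_eq_zero hn h.2
    rw [map_pow] at this
    exact eq_zero_of_pow_eq_zero this

lemma aroots_mul_sub_one [CharZero K] [DecidableEq L] {f : K[X]} (hf : f * (f - 1) ≠ 0)
    (hc : criticalValues L f ⊆ {0, 1}) :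
    (f * (f - 1)).aroots L = (derivative f).aroots L + ((f * (f - 1)).aroots L).dedup := by
  have : CharZero L := charZero_of_injective_algebraMap (algebraMap K L).injective
  ext α
  rw [Multiset.count_add, Multiset.count_dedup]
  by_cases hα : aeval α f ∈ ({0, 1} : Set L)
  · have hmem : α ∈ (f * (f - 1)).aroots L := by
      rw [mem_aroots, map_mul, map_sub, map_one, mul_eq_zero, sub_eq_zero]
      exact ⟨hf, hα⟩
    have hmap : (f * (f - 1)).map (algebraMap K L) =
        f.map (algebraMap K L) * (f.map (algebraMap K L) - 1) := by simp
    rw [if_pos hmem, count_roots, count_roots, ← derivative_map, hmap]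
    refine rootMultiplicity_mul_sub_one ?_ ?_
    · rw [← hmap]
      exact (Polynomial.map_ne_zero_iff (algebraMap K L).injective).mpr hf
    · rwa [eval_map_algebraMap]
  · have h1 : α ∉ (f * (f - 1)).aroots L := by
      rw [mem_aroots, map_mul, map_sub, map_one, mul_eq_zero, sub_eq_zero]
      exact fun h => hα h.2
    have h2 : α ∉ (derivative f).aroots L := fun h => hα (hc ⟨α, (mem_aroots.mp h).2, rfl⟩)
    rw [if_neg h1, Multiset.count_eq_zero.mpr h1, Multiset.count_eq_zero.mpr h2]

lemma natDegree_radical_mul_sub_one [CharZero K] [DecidableEq K] [IsAlgClosed L]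
    {f : K[X]} (hf : 0 < f.natDegree) (hc : criticalValues L f ⊆ {0, 1}) :
    (radical (f * (f - 1))).natDegree = f.natDegree + 1 := by
  classical
  have hf1 : (f - 1).natDegree = f.natDegree := by simpa using natDegree_sub_C (p := f) (a := 1)
  have hne : f ≠ 0 ∧ f - 1 ≠ 0 :=
    ⟨ne_zero_of_natDegree_gt hf, ne_zero_of_natDegree_gt (hf1 ▸ hf)⟩
  have hcard := congrArg Multiset.card (aroots_mul_sub_one L (mul_ne_zero hne.1 hne.2) hc)
  rw [← aroots_radical L (mul_ne_zero hne.1 hne.2)] at hcard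
  simp only [Multiset.card_add, IsAlgClosed.card_aroots_eq_natDegree,
    natDegree_mul hne.1 hne.2, hf1, natDegree_derivative] at hcard
  omega

lemma dvd_of_forall_aeval_eq_zero [PerfectField K] [IsAlgClosed L] {p q : K[X]} (hp : Squarefree p)
    (hq : q ≠ 0) (h : ∀ α : L, aeval α p = 0 → aeval α q = 0) : p ∣ q := by
  have hmap {g : K[X]} (hg : g ≠ 0) : g.map (algebraMap K L) ≠ 0 :=
    (Polynomial.map_ne_zero_iff (algebraMap K L).injective).mpr hg
  have hnodup : (p.aroots L).Nodup :=
    nodup_roots (PerfectField.separable_iff_squarefree.mpr hp).map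
  rw [← map_dvd_map' (algebraMap K L),
    IsAlgClosed.dvd_iff_roots_le_roots (hmap hp.ne_zero) (hmap hq), Multiset.le_iff_subset hnodup]
  exact fun α hα => mem_aroots.mpr ⟨hq, h α (mem_aroots.mp hα).2⟩

end Radical

section Localization

variable {R S : Type*} [CommRing R] [CommRing S] [Algebra R S] (M : Submonoid R)

lemma exists_mem_dvd_mul_of_algebraMap_dvd [IsLocalization M S] {x y : R}
    (h : algebraMap R S x ∣ algebraMap R S y) : ∃ m ∈ M, x ∣ m * y := by
  obtain ⟨b, hb⟩ := h
  obtain ⟨⟨b₀, t⟩, hb₀⟩ := IsLocalization.surj M b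
  obtain ⟨c, hc⟩ := (IsLocalization.eq_iff_exists M S (x := y * t) (y := x * b₀)).mp (by
    rw [map_mul, map_mul, hb, mul_assoc, hb₀])
  exact ⟨c * t, (c * t).2, c * b₀, by linear_combination hc⟩

variable [IsDomain R] [UniqueFactorizationMonoid R]

lemma isUnit_algebraMap_of_mul_self_dvd {x m : R} (hx : Squarefree x)
    (hm : IsUnit (algebraMap R S m)) {a : R} (ha : a * a ∣ m * x) :
    IsUnit (algebraMap R S a) := by
  induction a using induction_on_prime with
  | h₁ =>
    rw [zero_mul, zero_dvd_iff] at ha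
    rwa [← (mul_eq_zero_iff_right hx.ne_zero).mp ha]
  | h₂ u hu => exact hu.map _
  | h₃ a π _ hπ ih =>
    have hπm : π ∣ m := by
      by_contra hπm
      refine hπ.not_isUnit (hx π ?_)
      rw [← sq]
      exact hπ.pow_dvd_of_dvd_mul_left 2 hπm (.trans ⟨a * a, by ring⟩ ha)
    rw [map_mul]
    exact (isUnit_of_dvd_unit (map_dvd _ hπm) hm).mul (ih (.trans ⟨π * π, by ring⟩ ha))

lemma squarefree_algebraMap [IsLocalization M S] {x : R} (hx : Squarefree x) :
    Squarefree (algebraMap R S x) := by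
  intro a ha
  obtain ⟨⟨a₀, s⟩, ha₀⟩ := IsLocalization.surj M a
  have hs : IsUnit (algebraMap R S s) := IsLocalization.map_units S s
  have hdvd : algebraMap R S (a₀ * a₀) ∣ algebraMap R S x := by
    rw [map_mul, ← ha₀]
    exact (mul_dvd_mul (hs.mul_right_dvd.mpr dvd_rfl) (hs.mul_right_dvd.mpr dvd_rfl)).trans ha
  obtain ⟨m, hm, hmx⟩ := exists_mem_dvd_mul_of_algebraMap_dvd M hdvd
  have hunit := isUnit_algebraMap_of_mul_self_dvd hx (IsLocalization.map_units S ⟨m, hm⟩) hmx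
  rw [← ha₀] at hunit
  exact isUnit_of_mul_isUnit_left hunit

end Localization

section Denominators

attribute [local instance] MvPolynomial.algebraMvPolynomial

variable {σ R : Type*} (K : Type*) [CommRing R] [IsDomain R] [Field K] [Algebra R K]
  [IsFractionRing R K]

lemma exists_map_eq_C_mul (G : MvPolynomial σ K) :
    ∃ d : R, d ≠ 0 ∧ ∃ P : MvPolynomial σ R,
      P.map (algebraMap R K) = .C (algebraMap R K d) * G := by
  obtain ⟨⟨P, _, d, hd, rfl⟩, h⟩ :=
    IsLocalization.surj (R := MvPolynomial σ R) ((nonZeroDivisors R).map MvPolynomial.C) G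
  refine ⟨d, nonZeroDivisors.ne_zero hd, P, ?_⟩
  rw [MvPolynomial.algebraMap_def] at h
  simpa [mul_comm] using h.symm

lemma exists_forall_eval_dvd_mul_eval {P Q : MvPolynomial σ R}
    (h : P.map (algebraMap R K) ∣ Q.map (algebraMap R K)) :
    ∃ e : R, e ≠ 0 ∧ ∀ x : σ → R, P.eval x ∣ e * Q.eval x := by
  obtain ⟨_, ⟨e, he, rfl⟩, hdvd⟩ :=
    exists_mem_dvd_mul_of_algebraMap_dvd (S := MvPolynomial σ K)
      ((nonZeroDivisors R).map MvPolynomial.C) h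
  refine ⟨e, nonZeroDivisors.ne_zero he, fun x => ?_⟩
  simpa using map_dvd (MvPolynomial.eval x) hdvd

lemma squarefree_map [UniqueFactorizationMonoid R] {P : MvPolynomial σ R}
    (hP : Squarefree P) : Squarefree (P.map (algebraMap R K)) :=
  squarefree_algebraMap (S := MvPolynomial σ K) ((nonZeroDivisors R).map MvPolynomial.C) hP

end Denominators

section Homogenize

variable {R : Type*} [CommRing R] [IsDomain R]

lemma homogenize_dvd_homogenize {p q : R[X]} {m n : ℕ} (h : p ∣ q)
    (hp : p.natDegree ≤ m) (hq : q.natDegree ≤ n) (hmn : m + q.natDegree ≤ n + p.natDegree) :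
    p.homogenize m ∣ q.homogenize n := by
  obtain ⟨r, rfl⟩ := h
  rcases eq_or_ne p 0 with rfl | hp0
  · simp
  rcases eq_or_ne r 0 with rfl | hr0
  · simp
  rw [natDegree_mul hp0 hr0] at hmn hq
  obtain ⟨k, rfl⟩ : ∃ k, n = m + k := ⟨n - m, by omega⟩
  rw [homogenize_mul _ _ hp (by omega)]
  exact dvd_mul_right _ _

lemma exists_eq_homogenize {F : MvPolynomial (Fin 2) R} {r : ℕ} (hF : F.IsHomogeneous r) :
    ∃ p : R[X], p.natDegree ≤ r ∧ F = p.homogenize r := by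
  have hdeg := MvPolynomial.aeval_natDegree_le F hF.totalDegree_le ![X, (1 : R[X])] (n := 1)
    fun i => by fin_cases i <;> simp
  rw [mul_one] at hdeg
  exact ⟨_, hdeg, (homogenize_eq_of_isHomogeneous hF rfl).symm⟩

lemma squarefree_of_squarefree_homogenize {p : R[X]} {r : ℕ} (hp : p.natDegree ≤ r)
    (hsq : Squarefree (p.homogenize r)) : Squarefree p := by
  intro a ha
  have ha0 : a ≠ 0 := by
    rintro rfl
    rw [zero_mul, zero_dvd_iff] at ha
    exact hsq.ne_zero (by rw [ha, homogenize_zero])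
  have hdeg : (a * a).natDegree = a.natDegree + a.natDegree := natDegree_mul ha0 ha0
  have hdvd : a.homogenize a.natDegree * a.homogenize a.natDegree ∣ p.homogenize r := by
    rw [← homogenize_mul _ _ le_rfl le_rfl, ← hdeg]
    exact homogenize_dvd_homogenize ha le_rfl hp (by omega)
  have h := (hsq _ hdvd).map (MvPolynomial.aeval (![X, 1] : Fin 2 → R[X]))
  rwa [aeval_homogenize_X_one _ le_rfl] at h

lemma le_natDegree_add_one_of_squarefree_homogenize {p : R[X]} {r : ℕ} (hp : p.natDegree ≤ r)
    (hsq : Squarefree (p.homogenize r)) : r ≤ p.natDegree + 1 := by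
  by_contra! h
  obtain ⟨k, rfl⟩ : ∃ k, r = k + 2 := ⟨r - 2, by omega⟩
  have hdvd : (.X 1 : MvPolynomial (Fin 2) R) * .X 1 ∣ p.homogenize (k + 2) := by
    rw [← sq, ← homogenize_one, ← mul_one p, homogenize_mul _ _ (by omega) (by simp)]
    exact dvd_mul_left _ _
  exact (MvPolynomial.X_prime (i := 1)).not_isUnit (hsq _ hdvd)

end Homogenize

section BelyiForm

lemma homogenize_pow {R : Type*} [CommSemiring R] {p : R[X]} {n : ℕ} (hp : p.natDegree ≤ n)
    (k : ℕ) : (p ^ k).homogenize (k * n) = p.homogenize n ^ k := by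
  simpa using homogenize_finsetProd (s := Finset.range k) fun _ _ => hp

lemma exists_homogenize_dvd_homogenize_radical_pow {K : Type*} [Field K] [DecidableEq K]
    {p : K[X]} (hp : p ≠ 0) {m n : ℕ} (hm : p.natDegree ≤ m) (hn : (radical p).natDegree < n) :
    ∃ k, p.homogenize m ∣ (radical p).homogenize n ^ k := by
  obtain ⟨j, hj⟩ := exists_dvd_radical_self_pow hp
  refine ⟨j + m, ?_⟩
  rw [← homogenize_pow hn.le]
  refine homogenize_dvd_homogenize (hj.trans (pow_dvd_pow _ (Nat.le_add_right _ _))) hm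
    (natDegree_pow_le_of_le _ hn.le) ?_
  rw [natDegree_pow]
  nlinarith

lemma homogenize_mul_sub_one {K : Type*} [CommRing K] {f : K[X]} {n : ℕ} (hf : f.natDegree ≤ n) :
    (f * (f - 1)).homogenize (3 * n) =
      f.homogenize n * (f.homogenize n - .X 1 ^ n) * .X 1 ^ n := by
  have hf1 : (f - 1).natDegree ≤ n := by
    simpa using (natDegree_sub_C (p := f) (a := 1)).trans_le hf
  rw [show 3 * n = n + n + n by ring, ← mul_one (f * (f - 1)),
    homogenize_mul _ _ (natDegree_mul_le_of_le hf hf1) (by simp),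
    homogenize_mul _ _ hf hf1, homogenize_sub, homogenize_one]

theorem exists_belyi_form {F : MvPolynomial (Fin 2) ℚ} {r : ℕ} (hF : F.IsHomogeneous r)
    (hsq : Squarefree F) :
    ∃ (f : ℚ[X]) (G : MvPolynomial (Fin 2) ℚ) (s k : ℕ), 0 < f.natDegree ∧ G.IsHomogeneous s ∧
      r + s = f.natDegree + 2 ∧
      F * G ∣ (f * (f - 1)).homogenize (3 * f.natDegree) ∧
      (f * (f - 1)).homogenize (3 * f.natDegree) ∣ (F * G) ^ k := by
  obtain ⟨p, hpr, rfl⟩ := exists_eq_homogenize hF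
  have hp : Squarefree p := squarefree_of_squarefree_homogenize hpr hsq
  have hrp := le_natDegree_add_one_of_squarefree_homogenize hpr hsq
  obtain ⟨f, hf, hcrit, hroot⟩ := exists_belyi_polynomial (AlgebraicClosure ℚ) hp.ne_zero
  have hrad := natDegree_radical_mul_sub_one (AlgebraicClosure ℚ) hf hcrit
  have hf1 : (f - 1).natDegree = f.natDegree := by simpa using natDegree_sub_C (p := f) (a := 1)
  have hff : f * (f - 1) ≠ 0 :=
    mul_ne_zero (ne_zero_of_natDegree_gt hf) (ne_zero_of_natDegree_gt (hf1 ▸ hf))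
  obtain ⟨g, hg⟩ : p ∣ radical (f * (f - 1)) := by
    refine (dvd_radical_iff hp.isRadical hff).mpr
      (dvd_of_forall_aeval_eq_zero (AlgebraicClosure ℚ) hp hff fun α hα => ?_)
    simpa [sub_eq_zero] using hroot α hα
  have hdeg : p.natDegree + g.natDegree = f.natDegree + 1 := by
    rw [← hrad, hg, natDegree_mul hp.ne_zero (right_ne_zero_of_mul (hg ▸ radical_ne_zero))]
  obtain ⟨s, hs⟩ : ∃ s, r + s = f.natDegree + 2 := ⟨f.natDegree + 2 - r, by omega⟩
  have hdegff : (f * (f - 1)).natDegree = 2 * f.natDegree := by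
    rw [natDegree_mul (left_ne_zero_of_mul hff) (right_ne_zero_of_mul hff)]; omega
  obtain ⟨k, hk⟩ := exists_homogenize_dvd_homogenize_radical_pow hff
    (m := 3 * f.natDegree) (n := f.natDegree + 2)
    (by omega) (by omega)
  have hdvd := homogenize_dvd_homogenize (m := f.natDegree + 2) (n := 3 * f.natDegree)
    (radical_dvd_self (a := f * (f - 1))) (by omega) (by omega) (by omega)
  rw [hg, ← hs, homogenize_mul _ _ hpr (by omega)] at hk hdvd
  exact ⟨f, g.homogenize s, s, k, hf, isHomogeneous_homogenize g, hs, hdvd, hk⟩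

end BelyiForm

section Height

lemma isHomogeneous_geom_sum₂ {σ R : Type*} [CommSemiring R] {x y : MvPolynomial σ R} {d : ℕ}
    (hx : x.IsHomogeneous d) (hy : y.IsHomogeneous d) (n : ℕ) :
    (∑ i ∈ Finset.range n, x ^ i * y ^ (n - 1 - i)).IsHomogeneous (d * (n - 1)) := by
  refine MvPolynomial.IsHomogeneous.sum _ _ _ fun i hi => ?_
  have hi' : d * i + d * (n - 1 - i) = d * (n - 1) := by
    rw [← mul_add, Nat.add_sub_cancel' (by have := Finset.mem_range.mp hi; omega)]
  exact hi' ▸ (hx.pow i).mul (hy.pow _)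

lemma homogenize_eq_C_mul_X_pow_add {R : Type*} [CommSemiring R] {f : R[X]} {n : ℕ}
    (hf : f.natDegree = n + 1) :
    f.homogenize (n + 1) =
      .C f.leadingCoeff * .X 0 ^ (n + 1) + .X 1 * f.eraseLead.homogenize n := by
  have hB : f.eraseLead.natDegree ≤ n := by simpa [hf] using f.eraseLead_natDegree_le
  conv_lhs => rw [← f.eraseLead_add_C_mul_X_pow, ← one_mul f.eraseLead]
  rw [homogenize_add, add_comm n, homogenize_mul _ _ (by simp) hB, homogenize_C_mul, hf,
    homogenize_X_pow (by omega), homogenize_one]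
  simp [add_comm]

variable {K : Type*} [Field K]

/-- The identity is the expansion of `(a X₀ ^ D) ^ D = (F - X₁ B) ^ D`, where `F` is the
homogenization and `a X₀ ^ D` its leading term. -/
lemma exists_isHomogeneous_mul_homogenize_add_eq_X_pow {f : K[X]} {n : ℕ}
    (hf : f.natDegree = n + 1) :
    ∃ P Q : MvPolynomial (Fin 2) K, P.IsHomogeneous ((n + 1) * n) ∧ Q.IsHomogeneous ((n + 1) * n) ∧
      P * f.homogenize (n + 1) + Q * .X 1 ^ (n + 1) = .X 0 ^ ((n + 1) * n + (n + 1)) := by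
  set a := f.leadingCoeff with ha
  have ha0 : a ^ (n + 1) ≠ 0 := pow_ne_zero _ (leadingCoeff_ne_zero.mpr (by rintro rfl; simp at hf))
  set B := f.eraseLead.homogenize n
  set x : MvPolynomial (Fin 2) K := .C a * .X 0 ^ (n + 1)
  set y : MvPolynomial (Fin 2) K := -(.X 1 * B)
  have hB : B.IsHomogeneous n := isHomogeneous_homogenize _
  have hx : x.IsHomogeneous (n + 1) := (MvPolynomial.isHomogeneous_X_pow 0 _).C_mul a
  have hy : y.IsHomogeneous (n + 1) := by
    rw [add_comm]
    exact ((MvPolynomial.isHomogeneous_X _ 1).mul hB).neg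
  refine ⟨.C (a ^ (n + 1))⁻¹ * ∑ i ∈ Finset.range (n + 1), x ^ i * y ^ (n + 1 - 1 - i),
    .C (a ^ (n + 1))⁻¹ * (-B) ^ (n + 1), (isHomogeneous_geom_sum₂ hx hy _).C_mul _, ?_, ?_⟩
  · simpa [mul_comm] using (hB.neg.pow (n + 1)).C_mul (a ^ (n + 1))⁻¹
  · have hgeom := geom_sum₂_mul x y (n + 1)
    have hxy : x - y = f.homogenize (n + 1) := by
      rw [homogenize_eq_C_mul_X_pow_add hf, sub_neg_eq_add]
    rw [hxy] at hgeom
    have hx' : x ^ (n + 1) = .C (a ^ (n + 1)) * .X 0 ^ ((n + 1) * n + (n + 1)) := by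
      rw [mul_pow, ← pow_mul, ← map_pow]; rfl
    have hy' : y ^ (n + 1) = (-B) ^ (n + 1) * .X 1 ^ (n + 1) := by ring
    rw [mul_assoc, mul_assoc, ← mul_add, hgeom, ← hy', sub_add_cancel, hx', ← mul_assoc, ← map_mul,
      inv_mul_cancel₀ ha0, map_one, one_mul]

theorem exists_mul_mulHeight₁_pow_le [Height.AdmissibleAbsValues K] (f : K[X]) :
    ∃ C > 0, ∀ x : K, C * Height.mulHeight₁ x ^ f.natDegree ≤ Height.mulHeight₁ (f.eval x) := by
  rcases hf : f.natDegree with _ | n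
  · exact ⟨1, one_pos, fun x => by simpa using Height.one_le_mulHeight₁ _⟩
  obtain ⟨P, Q, hP, hQ, hPQ⟩ := exists_isHomogeneous_mul_homogenize_add_eq_X_pow hf
  have hq (a : Fin 2 × Fin 2) :
      (![![P, Q], ![0, .X 1 ^ ((n + 1) * n)]] a.1 a.2).IsHomogeneous ((n + 1) * n) := by
    obtain ⟨i, j⟩ := a
    fin_cases i <;> fin_cases j
    exacts [hP, hQ, MvPolynomial.isHomogeneous_zero _ _ _, MvPolynomial.isHomogeneous_X_pow _ _]
  obtain ⟨C, hC, h⟩ := Height.mulHeight_eval_ge' (N := n + 1) hq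
  refine ⟨C, hC, fun x => ?_⟩
  have hx := h ![f.homogenize (n + 1), .X 1 ^ (n + 1)] (x := ![x, 1]) fun i => by
    fin_cases i
    · simpa using congrArg (MvPolynomial.eval ![x, 1]) hPQ
    · simp
  have hval : (fun j => MvPolynomial.eval ![x, 1]
      (![f.homogenize (n + 1), .X 1 ^ (n + 1)] j)) = ![f.eval x, 1] := by
    ext j
    fin_cases j
    · simp [eval_homogenize hf.le]
    · simp
  rwa [hval, ← Height.mulHeight₁_eq_mulHeight, ← Height.mulHeight₁_eq_mulHeight] at hx

end Height

section RadNat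

lemma radNat_eq_radical (n : ℕ) : radNat n = radical n :=
  Nat.radical_eq_prod_primeFactors.symm

lemma radNat_pos (n : ℕ) : 0 < radNat n :=
  Finset.prod_pos fun _ hp => Nat.pos_of_mem_primeFactors hp

lemma radNat_le_mul_of_dvd {n e a b k : ℕ} (he : e ≠ 0) (ha : a ≠ 0) (hb : b ≠ 0)
    (h : n ∣ e * (a * b) ^ k) : radNat n ≤ e * (radNat a * b) := by
  have hne : e * (a * b) ^ k ≠ 0 := by positivity
  refine Nat.le_of_dvd (by have := radNat_pos a; positivity) ?_
  simp only [radNat_eq_radical]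
  calc radical n ∣ radical (e * (a * b) ^ k) := radical_dvd_radical h hne
    _ ∣ radical e * radical ((a * b) ^ k) := radical_mul_dvd
    _ ∣ e * (radical a * b) := mul_dvd_mul radical_dvd_self <|
        radical_pow_dvd.trans <| radical_mul_dvd.trans <| mul_dvd_mul_left _ radical_dvd_self

end RadNat

section ABC

/-- The product of the terms of `(y.num - y.den) + y.den = y.num`, the relation between coprime
integers to which the abc-conjecture is applied in order to bound the height of `y`. -/
def abcProduct (y : ℚ) : ℤ :=
  y.num * (y.num - y.den) * y.den

lemma abcProduct_eq_zero {y : ℚ} : abcProduct y = 0 ↔ y = 0 ∨ y = 1 := by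
  have h1 : y.num - y.den = 0 ↔ y = 1 := by
    rw [sub_eq_zero, ← Rat.intCast_inj, ← div_eq_one_iff_eq (by simp)]
    exact_mod_cast (congrArg (· = 1) y.num_div_den).to_iff
  simp [abcProduct, h1]

lemma abcProduct_div_dvd (a : ℤ) {c : ℤ} (hc : c ≠ 0) :
    abcProduct (a / c) ∣ a * (a - c) * c := by
  generalize hy : (a / c : ℚ) = y
  obtain ⟨g, rfl, rfl⟩ := Rat.num_den_mk hc (hy.symm.trans (Rat.divInt_eq_div a c).symm)
  exact ⟨g ^ 3, by rw [abcProduct]; ring⟩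

lemma exists_coprime_add_eq {y : ℚ} (h0 : y ≠ 0) (h1 : y ≠ 1) :
    ∃ a b c : ℕ, 0 < a ∧ 0 < b ∧ 0 < c ∧ a.Coprime b ∧ a + b = c ∧
      max y.num.natAbs y.den ≤ c ∧ a * b * c = (abcProduct y).natAbs := by
  have hne : abcProduct y ≠ 0 := by simp [abcProduct_eq_zero, h0, h1]
  have hcop := y.reduced
  rw [abcProduct] at hne ⊢
  rw [Int.natAbs_mul, Int.natAbs_mul, Int.natAbs_natCast]
  simp only [mul_ne_zero_iff] at hne
  obtain ⟨⟨hn, hm⟩, hd⟩ := hne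
  have hcases : (y.num - y.den).natAbs + y.den = y.num.natAbs ∨
      y.num.natAbs + (y.num - y.den).natAbs = y.den ∨
      y.num.natAbs + y.den = (y.num - y.den).natAbs := by omega
  have hnum : 0 < y.num.natAbs := by omega
  have hsub : 0 < (y.num - y.den).natAbs := by omega
  rcases hcases with h | h | h
  · refine ⟨_, _, _, hsub, y.pos, hnum, ?_, h, by omega, by ring⟩
    rwa [← h, Nat.coprime_add_self_left] at hcop
  · refine ⟨_, _, _, hnum, hsub, y.pos, ?_, h, by omega, by ring⟩
    rwa [← h, Nat.coprime_self_add_right] at hcop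
  · exact ⟨_, _, _, hnum, y.pos, hsub, hcop, h, by omega, by ring⟩

lemma exists_mulHeight₁_le_of_abc (habc : ABCConjecture) {η : ℝ} (hη : 0 < η) :
    ∃ K : ℝ, 0 < K ∧ ∀ y : ℚ,
      Height.mulHeight₁ y ≤ K * (radNat (abcProduct y).natAbs : ℝ) ^ (1 + η) := by
  obtain ⟨K, -, h⟩ := habc η hη
  refine ⟨max K 1, by positivity, fun y => ?_⟩
  by_cases hy : abcProduct y = 0
  · have h1 : Height.mulHeight₁ y = 1 := by
      rcases abcProduct_eq_zero.mp hy with rfl | rfl <;> simp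
    simp [h1, hy, radNat]
  · rw [abcProduct_eq_zero, not_or] at hy
    obtain ⟨a, b, c, ha, hb, hc, hab, habc, hle, hprod⟩ := exists_coprime_add_eq hy.1 hy.2
    calc Height.mulHeight₁ y ≤ c := by rw [Rat.mulHeight₁_eq_max]; exact_mod_cast hle
      _ ≤ K * (radNat (abcProduct y).natAbs : ℝ) ^ (1 + η) := hprod ▸ h a b c ha hb hc hab habc
      _ ≤ _ := by gcongr; exact le_max_left K 1

end ABC

section IntegralForms

lemma eval_div_eq_div {f : ℚ[X]} {A : MvPolynomial (Fin 2) ℤ} {d : ℤ} {n : ℕ}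
    (hf : f.natDegree ≤ n) (hd : d ≠ 0)
    (hA : A.map (algebraMap ℤ ℚ) = .C (algebraMap ℤ ℚ d) * f.homogenize n)
    (u : ℤ) {v : ℤ} (hv : v ≠ 0) :
    f.eval (u / v : ℚ) = (A.eval ![u, v] : ℤ) / (d * v ^ n : ℤ) := by
  have h := congrArg (MvPolynomial.eval (algebraMap ℤ ℚ ∘ ![u, v])) hA
  rw [MvPolynomial.eval_map, ← MvPolynomial.eval₂_comp, map_mul, MvPolynomial.eval_C,
    eval_homogenize hf _ (by simpa using hv)] at h
  rw [eq_div_iff (by exact_mod_cast mul_ne_zero hd (pow_ne_zero n hv))]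
  refine .trans ?_ h.symm
  simp [mul_left_comm]

lemma exists_abcProduct_eval_dvd {f : ℚ[X]} {Q : MvPolynomial (Fin 2) ℤ}
    (h : (f * (f - 1)).homogenize (3 * f.natDegree) ∣ Q.map (algebraMap ℤ ℚ)) :
    ∃ e : ℤ, e ≠ 0 ∧ ∀ u v : ℤ, v ≠ 0 →
      abcProduct (f.eval (u / v : ℚ)) ∣ e * Q.eval ![u, v] := by
  obtain ⟨d, hd, A, hA⟩ := exists_map_eq_C_mul (R := ℤ) ℚ (f.homogenize f.natDegree)
  set T : MvPolynomial (Fin 2) ℤ := .C d * .X 1 ^ f.natDegree with hT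
  have hmap : (A * (A - T) * T).map (algebraMap ℤ ℚ) =
      .C (algebraMap ℤ ℚ d ^ 3) * (f * (f - 1)).homogenize (3 * f.natDegree) := by
    rw [homogenize_mul_sub_one le_rfl, hT]
    simp only [map_mul, map_sub, map_pow, hA, MvPolynomial.map_C, MvPolynomial.map_X]
    ring
  have hdvd : (A * (A - T) * T).map (algebraMap ℤ ℚ) ∣ Q.map (algebraMap ℤ ℚ) := by
    have hunit : IsUnit (algebraMap ℤ ℚ d ^ 3) := by simpa using hd
    rw [hmap]
    exact ((hunit.map MvPolynomial.C).mul_left_dvd).mpr h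
  obtain ⟨e, he, hmul⟩ := exists_forall_eval_dvd_mul_eval ℚ hdvd
  refine ⟨e, he, fun u v hv => ?_⟩
  rw [eval_div_eq_div le_rfl hd hA u hv]
  refine (abcProduct_div_dvd _ (mul_ne_zero hd (pow_ne_zero _ hv))).trans ?_
  simpa [hT] using hmul ![u, v]

theorem exists_abcProduct_dvd_form {F : MvPolynomial (Fin 2) ℤ} {r : ℕ} (hF : F.IsHomogeneous r)
    (hsq : Squarefree F) :
    ∃ (f : ℚ[X]) (G : MvPolynomial (Fin 2) ℤ) (s k : ℕ) (e : ℤ), 0 < f.natDegree ∧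
      G.IsHomogeneous s ∧ r + s = f.natDegree + 2 ∧ e ≠ 0 ∧ ∀ u v : ℤ, v ≠ 0 →
        abcProduct (f.eval (u / v : ℚ)) ∣ e * (F.eval ![u, v] * G.eval ![u, v]) ^ k ∧
        (G.eval ![u, v] = 0 → abcProduct (f.eval (u / v : ℚ)) = 0) := by
  have hinj : Function.Injective (algebraMap ℤ ℚ) := Int.cast_injective
  obtain ⟨f, G₀, s, k, hf, hG₀, hs, hroot, hdvd⟩ :=
    exists_belyi_form (hF.map (algebraMap ℤ ℚ)) (squarefree_map ℚ hsq)
  obtain ⟨d, hd, G, hG⟩ := exists_map_eq_C_mul (R := ℤ) ℚ G₀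
  have hGhom : G.IsHomogeneous s := .of_map hinj (hG ▸ hG₀.C_mul _)
  have hpow : (f * (f - 1)).homogenize (3 * f.natDegree) ∣
      ((F * G) ^ k).map (algebraMap ℤ ℚ) := by
    refine hdvd.trans ?_
    rw [map_pow, map_mul, hG]
    exact pow_dvd_pow_of_dvd (mul_dvd_mul_left _ (dvd_mul_left _ _)) k
  obtain ⟨e, he, hmul⟩ := exists_abcProduct_eval_dvd hpow
  refine ⟨f, G, s, k, e, hf, hGhom, hs, he, fun u v hv => ⟨by simpa using hmul u v hv, ?_⟩⟩
  intro h0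
  have hG₀0 : G₀.eval (algebraMap ℤ ℚ ∘ ![u, v]) = 0 := by
    have h := congrArg (MvPolynomial.eval (algebraMap ℤ ℚ ∘ ![u, v])) hG
    rw [MvPolynomial.eval_map, ← MvPolynomial.eval₂_comp, h0] at h
    simpa [hd] using h.symm
  have h := map_dvd (MvPolynomial.eval (algebraMap ℤ ℚ ∘ ![u, v])) hroot
  rw [map_mul, hG₀0, mul_zero, zero_dvd_iff, homogenize_mul_sub_one le_rfl, map_mul, map_mul,
    map_sub, eval_homogenize le_rfl _ (by simpa using hv)] at h
  simpa [abcProduct_eq_zero, hv, ← sub_one_mul, sub_eq_zero] using h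

end IntegralForms

section RadicalBound

lemma mulHeight₁_intCast_div {u v : ℤ} (h : IsCoprime u v) :
    Height.mulHeight₁ (u / v : ℚ) = (max |u| |v| : ℤ) := by
  have hgcd : (Finset.univ : Finset (Fin 2)).gcd ![u, v] = 1 := by
    simpa [Finset.univ_fin2, ← Int.coe_gcd, ← Int.abs_eq_normalize, Int.gcd_def, Int.natAbs_abs]
      using Int.isCoprime_iff_gcd_eq_one.mp h
  have hmax : ⨆ i, |(![u, v] : Fin 2 → ℤ) i| = max |u| |v| := by
    refine le_antisymm (ciSup_le fun i => by fin_cases i <;> simp) (max_le ?_ ?_)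
    · exact Finite.le_ciSup_of_le 0 (by simp)
    · exact Finite.le_ciSup_of_le 1 (by simp)
  rw [Height.mulHeight₁_div_eq_mulHeight, ← hmax, ← Rat.mulHeight_eq_max_abs_of_gcd_eq_one hgcd]
  congr 1
  ext i
  fin_cases i <;> simp

lemma one_le_max_abs {u v : ℤ} (h : IsCoprime u v) : (1 : ℝ) ≤ (max |u| |v| : ℤ) :=
  mulHeight₁_intCast_div h ▸ Height.one_le_mulHeight₁ _

lemma exists_abs_eval_le {σ : Type*} [Finite σ] {G : MvPolynomial σ ℤ} {n : ℕ}
    (hG : G.IsHomogeneous n) :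
    ∃ S : ℝ, 1 ≤ S ∧ ∀ (x : σ → ℤ) (H : ℝ), 0 ≤ H → (∀ i, |(x i : ℝ)| ≤ H) →
      ((G.eval x).natAbs : ℝ) ≤ S * H ^ n := by
  let P := G.map (Int.castRingHom ℝ)
  have h (x : σ → ℤ) := AbsoluteValue.abs.eval_mvPolynomial_le (hG.map (Int.castRingHom ℝ))
    (Int.castRingHom ℝ ∘ x)
  simp only [MvPolynomial.eval_map, ← MvPolynomial.eval₂_comp] at h
  refine ⟨max ((AddMonoidAlgebra.coeff P).sum fun _ c => |c|) 1, le_max_right _ _,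
    fun x H hH hx => ?_⟩
  rw [Nat.cast_natAbs, Int.cast_abs]
  refine (h x).trans ?_
  have hsup : 0 ≤ ⨆ i, |(x i : ℝ)| := Real.iSup_nonneg fun i => abs_nonneg _
  exact mul_le_mul (le_max_left _ _) (pow_le_pow_left₀ hsup (Real.iSup_le hx hH) n)
    (pow_nonneg hsup n) (by positivity)

lemma exists_radNat_abcProduct_le {F : MvPolynomial (Fin 2) ℤ} {r : ℕ}
    (hF : F.IsHomogeneous r) (hsq : Squarefree F) :
    ∃ (f : ℚ[X]) (s : ℕ) (B : ℝ), 0 < f.natDegree ∧ r + s = f.natDegree + 2 ∧ 0 < B ∧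
      ∀ u v : ℤ, IsCoprime u v → v ≠ 0 → F.eval ![u, v] ≠ 0 →
        (radNat (abcProduct (f.eval (u / v : ℚ))).natAbs : ℝ) ≤
          B * (max |u| |v| : ℤ) ^ s * radNat (F.eval ![u, v]).natAbs := by
  obtain ⟨f, G, s, k, e, hf, hG, hs, he, h⟩ := exists_abcProduct_dvd_form hF hsq
  obtain ⟨S, hS, hGS⟩ := exists_abs_eval_le hG
  have he1 : (1 : ℝ) ≤ e.natAbs := by exact_mod_cast Int.natAbs_pos.mpr he
  refine ⟨f, s, e.natAbs * S, hf, hs, by positivity, fun u v huv hv hne => ?_⟩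
  obtain ⟨hdvd, hzero⟩ := h u v hv
  have hH := one_le_max_abs huv
  set z := abcProduct (f.eval (u / v : ℚ))
  set R := radNat (F.eval ![u, v]).natAbs
  have hR : (1 : ℝ) ≤ R := by exact_mod_cast radNat_pos _
  rcases eq_or_ne z 0 with hz | hz
  · rw [hz, Int.natAbs_zero, radNat, Nat.primeFactors_zero, Finset.prod_empty, Nat.cast_one]
    exact one_le_mul_of_one_le_of_one_le
      (one_le_mul_of_one_le_of_one_le (one_le_mul_of_one_le_of_one_le he1 hS) (one_le_pow₀ hH)) hR
  have hGuv : ((G.eval ![u, v]).natAbs : ℝ) ≤ S * ((max |u| |v| : ℤ) : ℝ) ^ s :=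
    hGS _ _ (by positivity) fun i => by fin_cases i <;> simp
  have hle : radNat z.natAbs ≤ e.natAbs * (R * (G.eval ![u, v]).natAbs) :=
    radNat_le_mul_of_dvd (Int.natAbs_ne_zero.mpr he) (Int.natAbs_ne_zero.mpr hne)
      (Int.natAbs_ne_zero.mpr (mt hzero hz))
      (by simpa [Int.natAbs_mul, Int.natAbs_pow] using Int.natAbs_dvd_natAbs.mpr hdvd)
  calc (radNat z.natAbs : ℝ) ≤ e.natAbs * (R * (G.eval ![u, v]).natAbs) := by exact_mod_cast hle
    _ ≤ e.natAbs * (R * (S * ((max |u| |v| : ℤ) : ℝ) ^ s)) := by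
        gcongr
    _ = _ := by ring

lemma rpow_inv_mul_rpow_div_le {κ H a t ρ : ℝ} (hκ : 0 ≤ κ) (hH : 0 ≤ H) (hρ : 0 ≤ ρ)
    (ht : 0 < t) (h : κ * H ^ a ≤ ρ ^ t) : κ ^ t⁻¹ * H ^ (a / t) ≤ ρ := by
  rw [div_eq_mul_inv, Real.rpow_mul hH, ← Real.mul_rpow hκ (by positivity)]
  exact (Real.rpow_inv_le_iff_of_pos (by positivity) hρ ht).mpr h

lemma sub_le_div_one_add {D δ : ℝ} (hD : 0 < D) (hδ : 0 < δ) : D - δ ≤ D / (1 + δ / D) := by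
  rw [le_div_iff₀ (by positivity)]
  have : 0 ≤ δ * (δ / D) := by positivity
  linear_combination this + mul_div_cancel₀ δ hD.ne'

theorem exists_mul_rpow_le_radNat (habc : ABCConjecture) {F : MvPolynomial (Fin 2) ℤ} {r : ℕ}
    (hF : F.IsHomogeneous r) (hsq : Squarefree F) {δ : ℝ} (hδ : 0 < δ) :
    ∃ c : ℝ, 0 < c ∧ ∀ u v : ℤ, IsCoprime u v → F.eval ![u, v] ≠ 0 →
      c * (max |u| |v| : ℤ) ^ ((r : ℝ) - 2 - δ) ≤ radNat (F.eval ![u, v]).natAbs := by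
  obtain ⟨f, s, B, hf, hs, hB, hrad⟩ := exists_radNat_abcProduct_le hF hsq
  have hD : (0 : ℝ) < f.natDegree := by exact_mod_cast hf
  set D := (f.natDegree : ℝ) with hDdef
  obtain ⟨C, hC, hheight⟩ := exists_mul_mulHeight₁_pow_le f
  obtain ⟨K, hK, habc⟩ := exists_mulHeight₁_le_of_abc habc (div_pos hδ hD)
  set κ : ℝ := (C / K) ^ (1 + δ / D)⁻¹ / B
  refine ⟨min κ 1, by positivity, fun u v huv hne => ?_⟩
  have hH := one_le_max_abs huv
  set R := radNat (F.eval ![u, v]).natAbs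
  rcases eq_or_ne v 0 with rfl | hv
  · rw [abs_zero, max_eq_left (abs_nonneg u),
      Int.isUnit_iff_abs_eq.mp (isCoprime_zero_right.mp huv), Int.cast_one, Real.one_rpow, mul_one]
    exact (min_le_right _ _).trans (by exact_mod_cast radNat_pos _)
  have hy := (hheight _).trans (habc (f.eval (u / v : ℚ)))
  rw [mulHeight₁_intCast_div huv] at hy
  set H := ((max |u| |v| : ℤ) : ℝ)
  have hpow : C / K * H ^ D ≤ (B * H ^ s * R) ^ (1 + δ / D) := by
    rw [Real.rpow_natCast, div_mul_eq_mul_div, div_le_iff₀' hK]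
    refine hy.trans ?_
    gcongr
    exact hrad u v huv hv hne
  have hroot := rpow_inv_mul_rpow_div_le (by positivity) (by positivity) (by positivity)
    (by positivity) hpow
  have hexp : (r : ℝ) - 2 - δ ≤ D / (1 + δ / D) - s := by
    have : (r : ℝ) + s = D + 2 := by rw [hDdef]; exact_mod_cast hs
    linarith [sub_le_div_one_add hD hδ]
  calc min κ 1 * H ^ ((r : ℝ) - 2 - δ) ≤ κ * H ^ (D / (1 + δ / D) - s) := by
        gcongr
        exact min_le_left _ _
    _ = (C / K) ^ (1 + δ / D)⁻¹ * H ^ (D / (1 + δ / D)) / (B * H ^ s) := by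
        rw [Real.rpow_sub (by positivity), Real.rpow_natCast, div_mul_div_comm]
    _ ≤ R := by rwa [div_le_iff₀' (by positivity)]

end RadicalBound

section Multiplicity

lemma radNat_pow_le_prod_pow_mul {n : ℕ} (hn : n ≠ 0) (q : ℕ) :
    radNat n ^ q ≤
      (∏ p ∈ n.primeFactors with n.factorization p ≤ q - 1, p) ^ (q - 1) * n := by
  have hfac : ∏ p ∈ n.primeFactors, p ^ n.factorization p = n :=
    Nat.prod_factorization_pow_eq_self hn
  refine le_of_le_of_eq ?_ (congrArg _ hfac)
  rw [radNat, Finset.prod_filter, ← Finset.prod_pow, ← Finset.prod_pow, ← Finset.prod_mul_distrib]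
  refine Finset.prod_le_prod' fun p hp => ?_
  have hp0 := Nat.pos_of_mem_primeFactors hp
  have hpos : n.factorization p ≠ 0 := Finsupp.mem_support_iff.mp hp
  split_ifs with h
  · rw [← pow_add]
    exact Nat.pow_le_pow_right hp0 (by omega)
  · rw [one_pow, one_mul]
    exact Nat.pow_le_pow_right hp0 (by omega)

lemma rpow_inv_mul_rpow_le_of_pow_le {c S H a ρ : ℝ} {b q : ℕ} (hq : 2 ≤ q) (hc : 0 ≤ c)
    (hS : 0 < S) (hH : 0 < H) (hρ : 0 ≤ ρ) (h : (c * H ^ a) ^ q ≤ ρ ^ (q - 1) * (S * H ^ b)) :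
    (c ^ q / S) ^ ((q : ℝ) - 1)⁻¹ * H ^ ((a * q - b) / (q - 1)) ≤ ρ := by
  have hq1 : (q : ℝ) - 1 = (q - 1 : ℕ) := by rw [Nat.cast_sub (by omega), Nat.cast_one]
  have hpos : (0 : ℝ) < (q - 1 : ℕ) := by exact_mod_cast Nat.sub_pos_of_lt hq
  rw [hq1]
  refine rpow_inv_mul_rpow_div_le (by positivity) hH.le hρ hpos ?_
  rw [Real.rpow_natCast, Real.rpow_sub hH, Real.rpow_mul hH.le, Real.rpow_natCast,
    Real.rpow_natCast, div_mul_div_comm, div_le_iff₀ (by positivity), ← mul_pow]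
  exact h

end Multiplicity

theorem stmt14 (habc : ABCConjecture) (F : MvPolynomial (Fin 2) ℤ) (r q : ℕ)
    (hq : 2 ≤ q) (hF : F ≠ 0) (hhom : F.IsHomogeneous r) (hsq : Squarefree F) :
    ∀ ε : ℝ, 0 < ε → ∃ c : ℝ, 0 < c ∧
      ∀ u v : ℤ, IsCoprime u v → MvPolynomial.eval ![u, v] F ≠ 0 →
        c * ((max |u| |v| : ℤ) : ℝ) ^ ((r : ℝ) - 2 - 2 / ((q : ℝ) - 1) - ε) ≤
          ((∏ p ∈ Finset.filter
                (fun p => (MvPolynomial.eval ![u, v] F).natAbs.factorization p ≤ q - 1)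
                (MvPolynomial.eval ![u, v] F).natAbs.primeFactors, p : ℕ) : ℝ) := by
  intro ε hε
  have hq1 : (0 : ℝ) < (q : ℝ) - 1 := sub_pos.mpr (by exact_mod_cast hq)
  have hq0 : (0 : ℝ) < q := by linarith
  obtain ⟨c, hc, hrad⟩ := exists_mul_rpow_le_radNat habc hhom hsq (δ := ε * (q - 1) / q)
    (div_pos (mul_pos hε hq1) hq0)
  obtain ⟨S, hS, hFS⟩ := exists_abs_eval_le hhom
  refine ⟨(c ^ q / S) ^ ((q : ℝ) - 1)⁻¹, by positivity, fun u v huv hne => ?_⟩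
  have hH := one_le_max_abs huv
  have hle : ((F.eval ![u, v]).natAbs : ℝ) ≤ S * ((max |u| |v| : ℤ) : ℝ) ^ r :=
    hFS _ _ (by positivity) fun i => by fin_cases i <;> simp
  have hpow := radNat_pow_le_prod_pow_mul (Int.natAbs_ne_zero.mpr hne) q
  specialize hrad u v huv hne
  set n := (F.eval ![u, v]).natAbs
  have hexp : (r : ℝ) - 2 - 2 / (q - 1) - ε =
      (((r : ℝ) - 2 - ε * (q - 1) / q) * q - r) / (q - 1) := by field_simp; ring
  rw [hexp]
  refine rpow_inv_mul_rpow_le_of_pow_le hq hc.le (by positivity) (by positivity) (by positivity) ?_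
  calc _ ≤ (radNat n : ℝ) ^ q := by gcongr
    _ ≤ ((∏ p ∈ n.primeFactors with n.factorization p ≤ q - 1, p : ℕ) : ℝ) ^ (q - 1) * n := by
        exact_mod_cast hpow
    _ ≤ _ := by gcongr
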